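/- Let G be any group with subgroups H and K. Suppose X is a nontrivial H-almost invariant subset of G, and Y is the almost invariant set arising from a splitting of G over K. If X crosses Y (i.e. none of the four corners X∩Y, X∩Y*, X*∩Y, X*∩Y* is K-finite), then Y crosses X (i.e. none of the four corners is H-finite). -/

import Mathlib

/-!
Let `A` be the `a`-side of the edge `e = (a, b)`, so that `Y = {g | g • v ∈ A}`. Replacing `X` or `Y`
by its complement (the complement of `Y` is the standard set of the reversed edge), it suffices to
show: if `H X = X`, `X` is not `H`-finite and `X ∩ Y` is `H`-finite, then `X ∩ Y` is `K`-finite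
(`hFinite_corner`).

Say `X ∩ Y ⊆ H F` with `F` finite. Since `X` is left `H`-invariant, every `x ∈ X` with `x • v ∈ h A`
for some `h ∈ H` also lies in `H F`. Half-trees are nested (`side_nested`), so for each `h ∈ H` one
of the following holds.

* `A ∪ h A` is the whole tree. Then `X ⊆ H F`, which is impossible.
* `A ⊆ h A` or `h A ⊆ A`, with `h ∉ K`. Up to inverting `h`, the half-trees `h ^ n A` increase and
  exhaust the tree (`exists_mem_side_pow`): a path from a vertex outside all of them to `a` would
  have to contain the infinitely many distinct edges `h ^ n e`. Again `X ⊆ H F`, which is impossible.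
* `h ∈ K`, or `A` and `h A` are disjoint.

Hence only the last possibility occurs. If `x, y ∈ X ∩ Y` lie in the same coset `H f`, then
`h = x y⁻¹ ∈ H` and `x • v ∈ A ∩ h A`, so `h ∈ K`. Thus each of the finitely many cosets `H f`
meets `X ∩ Y` inside a single coset of `K`.
-/

open scoped Pointwise

universe u v w

/-- A subset `S` of `G` is `H`-finite if it is contained in the union of
finitely many right cosets `Hg` of `H` in `G`. -/
def HFinite {G : Type u} [Group G] (H : Subgroup G) (S : Set G) : Prop :=
  ∃ F : Finset G, S ⊆ ⋃ g ∈ F, (H : Set G) * {g}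

/-- Two subsets of `G` are `H`-almost equal if their symmetric difference is `H`-finite. -/
def HAlmostEqual {G : Type u} [Group G] (H : Subgroup G) (A B : Set G) : Prop :=
  HFinite H ((A \ B) ∪ (B \ A))

/-- `X` is an `H`-almost invariant subset of `G`: `hX = X` for all `h ∈ H`, and for
every `g ∈ G` the symmetric difference of `Xg` and `X` is `H`-finite. -/
def IsAlmostInvariant {G : Type u} [Group G] (H : Subgroup G) (X : Set G) : Prop :=
  (∀ h ∈ H, (fun x => h * x) '' X = X) ∧
    ∀ g : G, HAlmostEqual H ((fun x => x * g) '' X) X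

/-- An `H`-almost invariant set is nontrivial if neither it nor its complement is `H`-finite. -/
def IsNontrivialAI {G : Type u} [Group G] (H : Subgroup G) (X : Set G) : Prop :=
  ¬ HFinite H X ∧ ¬ HFinite H Xᶜ

/-- A `G`-tree: a connected acyclic simple graph together with an action of `G` on its
vertices by graph automorphisms, such that no element of `G` interchanges the two
endpoints of any edge. -/
structure GTree (G : Type u) [Group G] (V : Type v) where
  graph : SimpleGraph V
  smul : G → V → V
  smul_one : ∀ x : V, smul 1 x = x
  smul_mul : ∀ (g h : G) (x : V), smul (g * h) x = smul g (smul h x)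
  adj_smul : ∀ (g : G) (x y : V), graph.Adj x y → graph.Adj (smul g x) (smul g y)
  no_inversion : ∀ (g : G) (x y : V), graph.Adj x y → ¬ (smul g x = y ∧ smul g y = x)
  connected : graph.Connected
  acyclic : graph.IsAcyclic

namespace GTree

variable {G : Type u} [Group G] {V : Type v}

/-- The stabilizer of the directed edge `(a, b)`. -/
def edgeStab (T : GTree G V) (a b : V) : Subgroup G where
  carrier := {g : G | T.smul g a = a ∧ T.smul g b = b}
  one_mem' := ⟨T.smul_one a, T.smul_one b⟩
  mul_mem' := by
    rintro x y ⟨hxa, hxb⟩ ⟨hya, hyb⟩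
    exact ⟨by rw [T.smul_mul, hya, hxa], by rw [T.smul_mul, hyb, hxb]⟩
  inv_mem' := by
    rintro x ⟨hxa, hxb⟩
    constructor
    · conv_lhs => rw [← hxa]
      rw [← T.smul_mul, inv_mul_cancel, T.smul_one]
    · conv_lhs => rw [← hxb]
      rw [← T.smul_mul, inv_mul_cancel, T.smul_one]

/-- The `a`-side of the directed edge `(a, b)`: the set of vertices reachable from `a`
after deleting the edge `{a, b}`. -/
def side (T : GTree G V) (a b : V) : Set V :=
  {x : V | (T.graph.deleteEdges {s(a, b)}).Reachable a x}

/-- The standard set determined by the directed edge `(a, b)` and the base vertex `v`: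
`{g ∈ G | g • v lies in the a-side of (a, b)}`. -/
def standardSet (T : GTree G V) (a b : V) (v : V) : Set G :=
  {g : G | T.smul g v ∈ T.side a b}

/-- `(T, a, b)` is a splitting of `G` over `H`: the `G`-tree `T` has no global fixed
vertex, `G` acts transitively on the undirected edges, `(a, b)` is a directed edge,
and the stabilizer of `(a, b)` is `H`. -/
def IsSplitting (T : GTree G V) (a b : V) (H : Subgroup G) : Prop :=
  T.graph.Adj a b ∧
  (∀ x : V, ∃ g : G, T.smul g x ≠ x) ∧
  (∀ c d : V, T.graph.Adj c d →
    ∃ g : G, (T.smul g a = c ∧ T.smul g b = d) ∨ (T.smul g a = d ∧ T.smul g b = c)) ∧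
  T.edgeStab a b = H

/-- Two `G`-trees are (`G`-equivariantly) isomorphic: there is a graph isomorphism
commuting with the `G`-actions. -/
def EquivIso {V₁ : Type v} {V₂ : Type w} (T₁ : GTree G V₁) (T₂ : GTree G V₂) : Prop :=
  ∃ f : T₁.graph ≃g T₂.graph, ∀ (g : G) (x : V₁), f (T₁.smul g x) = T₂.smul g (f x)

end GTree

/-- `Σ(X)`: the family of all translates of `X` and of its complement. -/
def TransSet {G : Type u} [Group G] (X : Set G) : Set (Set G) :=
  {A : Set G | ∃ g : G, A = g • X ∨ A = (g • X)ᶜ}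

/-- A corner `C` of a pair `(A, B)` is small if it is `Stab(A)`-finite. -/
def SmallCorner {G : Type u} [Group G] (A C : Set G) : Prop :=
  HFinite (MulAction.stabilizer G A) C

/-- At least two of four statements hold. -/
def TwoOfFour (P₁ P₂ P₃ P₄ : Prop) : Prop :=
  (P₁ ∧ P₂) ∨ (P₁ ∧ P₃) ∨ (P₁ ∧ P₄) ∨ (P₂ ∧ P₃) ∨ (P₂ ∧ P₄) ∨ (P₃ ∧ P₄)

/-- Almost inclusion: `A ≤ B` iff `A ∩ B*` is empty or is the only small corner of `(A, B)`. -/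
def AILE {G : Type u} [Group G] (A B : Set G) : Prop :=
  A ∩ Bᶜ = ∅ ∨
    (SmallCorner A (A ∩ Bᶜ) ∧ ¬ SmallCorner A (A ∩ B) ∧ ¬ SmallCorner A (Aᶜ ∩ B) ∧ ¬ SmallCorner A (Aᶜ ∩ Bᶜ))

/-- `A` crosses `B`: no corner of the pair `(A, B)` is small. -/
def AICrosses {G : Type u} [Group G] (A B : Set G) : Prop :=
  ¬ SmallCorner A (A ∩ B) ∧ ¬ SmallCorner A (A ∩ Bᶜ) ∧ ¬ SmallCorner A (Aᶜ ∩ B) ∧ ¬ SmallCorner A (Aᶜ ∩ Bᶜ)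

/-- A finite family of almost invariant sets satisfies sandwiching. -/
def Sandwiching {G : Type u} [Group G] {n : ℕ} (X : Fin n → Set G) : Prop :=
  ∀ j k : Fin n,
    (∃ A ∈ TransSet (X k), ∃ B ∈ TransSet (X k), AILE A (X j) ∧ AILE (X j) B) ∨
    ∀ A ∈ TransSet (X k), AICrosses (X j) A

/-- The splitting over `H` is a trivially ascending HNN extension: `H` is normal in `G`
and `G/H` is infinite cyclic. -/
def TrivAscHNN {G : Type u} [Group G] (H : Subgroup G) : Prop :=
  H.Normal ∧ ∃ t : G, (∀ g : G, ∃ n : ℤ, g * (t ^ n)⁻¹ ∈ H) ∧ ∀ n : ℤ, t ^ n ∈ H → n = 0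

/-- Two subsets are nested if one of the four inclusions among them and their
complements holds. -/
def Nested {G : Type u} (A B : Set G) : Prop :=
  A ⊆ B ∨ A ⊆ Bᶜ ∨ Aᶜ ⊆ B ∨ Aᶜ ⊆ Bᶜ

/-- `X` crosses `Y` with respect to the subgroup `L`: no corner of `(X, Y)` is `L`-finite. -/
def CrossesWrt {G : Type u} [Group G] (L : Subgroup G) (X Y : Set G) : Prop :=
  ¬ HFinite L (X ∩ Y) ∧ ¬ HFinite L (X ∩ Yᶜ) ∧ ¬ HFinite L (Xᶜ ∩ Y) ∧ ¬ HFinite L (Xᶜ ∩ Yᶜ)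

theorem hFinite_iff {G : Type u} [Group G] (H : Subgroup G) (S : Set G) :
    HFinite H S ↔ ∃ F : Finset G, ∀ x ∈ S, ∃ f ∈ F, x * f⁻¹ ∈ H := by
  unfold HFinite
  refine exists_congr fun F => ?_
  simp only [Set.subset_def, Set.mem_iUnion, Set.mul_singleton, Set.mem_image, exists_prop,
    SetLike.mem_coe]
  refine forall₂_congr fun x _ => exists_congr fun f => and_congr_right fun _ => ?_
  constructor
  · rintro ⟨h, hh, rfl⟩
    simpa using hh
  · intro h
    exact ⟨_, h, by simp⟩

namespace GTree

variable {G : Type u} [Group G] {V : Type v}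

/-! ### Half-trees -/

theorem smul_inv_smul (T : GTree G V) (g : G) (x : V) : T.smul g (T.smul g⁻¹ x) = x := by
  rw [← T.smul_mul, mul_inv_cancel, T.smul_one]

theorem inv_smul_smul (T : GTree G V) (g : G) (x : V) : T.smul g⁻¹ (T.smul g x) = x := by
  rw [← T.smul_mul, inv_mul_cancel, T.smul_one]

theorem smul_injective (T : GTree G V) (g : G) : Function.Injective (T.smul g) :=
  Function.LeftInverse.injective (T.inv_smul_smul g)

theorem left_mem_side (T : GTree G V) (a b : V) : a ∈ T.side a b :=
  SimpleGraph.Reachable.refl _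

/-- A half-tree is closed under passing to adjacent vertices, except across its own edge. -/
theorem mem_side_of_adj (T : GTree G V) {a b x y : V} (hx : x ∈ T.side a b)
    (hxy : T.graph.Adj x y) (hne : s(x, y) ≠ s(a, b)) : y ∈ T.side a b := by
  refine SimpleGraph.Reachable.trans hx (SimpleGraph.Adj.reachable ?_)
  rw [SimpleGraph.deleteEdges_adj]
  exact ⟨hxy, hne⟩

/-- Induction principle for membership in a half-tree. -/
theorem side_induction (T : GTree G V) {a b : V} {P : V → Prop} (h0 : P a)
    (hs : ∀ x y, x ∈ T.side a b → T.graph.Adj x y → s(x, y) ≠ s(a, b) → P x → P y)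
    {x : V} (hx : x ∈ T.side a b) : P x := by
  have hx' : Relation.ReflTransGen (T.graph.deleteEdges {s(a, b)}).Adj a x :=
    (SimpleGraph.reachable_iff_reflTransGen _ _).1 hx
  induction hx' with
  | refl => exact h0
  | @tail y z hy hyz ih =>
    have hy' : y ∈ T.side a b := (SimpleGraph.reachable_iff_reflTransGen _ _).2 hy
    rw [SimpleGraph.deleteEdges_adj] at hyz
    exact hs y z hy' hyz.1 hyz.2 (ih hy')

theorem right_notMem_side (T : GTree G V) {a b : V} (hab : T.graph.Adj a b) :
    b ∉ T.side a b := by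
  have h := SimpleGraph.isAcyclic_iff_forall_adj_isBridge.1 T.acyclic hab
  rw [SimpleGraph.isBridge_iff] at h
  exact h

theorem mem_side_or (T : GTree G V) (a b x : V) : x ∈ T.side a b ∨ x ∈ T.side b a := by
  have hx : Relation.ReflTransGen T.graph.Adj a x :=
    (SimpleGraph.reachable_iff_reflTransGen _ _).1 (T.connected.preconnected a x)
  induction hx with
  | refl => exact Or.inl (T.left_mem_side a b)
  | @tail y z _ hyz ih =>
    by_cases he : s(y, z) = s(a, b)
    · rcases Sym2.eq_iff.1 he with ⟨_, rfl⟩ | ⟨_, rfl⟩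
      · exact Or.inr (T.left_mem_side _ _)
      · exact Or.inl (T.left_mem_side _ _)
    · rcases ih with ih | ih
      · exact Or.inl (T.mem_side_of_adj ih hyz he)
      · exact Or.inr (T.mem_side_of_adj ih hyz (by rwa [Sym2.eq_swap (a := b)]))

theorem mem_side_swap (T : GTree G V) {a b : V} (hab : T.graph.Adj a b) (x : V) :
    x ∈ T.side b a ↔ x ∉ T.side a b := by
  refine ⟨fun h1 h2 => T.right_notMem_side hab ?_, fun h => (T.mem_side_or a b x).resolve_left h⟩
  have h1' : (T.graph.deleteEdges {s(a, b)}).Reachable b x := by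
    have := h1
    unfold side at this
    rwa [Sym2.eq_swap] at this
  exact SimpleGraph.Reachable.trans h2 h1'.symm

theorem smul_mem_side (T : GTree G V) (g : G) {a b x : V} (hx : x ∈ T.side a b) :
    T.smul g x ∈ T.side (T.smul g a) (T.smul g b) := by
  refine T.side_induction (P := fun x => T.smul g x ∈ T.side (T.smul g a) (T.smul g b))
    (T.left_mem_side _ _) ?_ hx
  intro x y _ hxy hne ih
  refine T.mem_side_of_adj ih (T.adj_smul g x y hxy) fun h => hne ?_
  have hmap : Sym2.map (T.smul g) s(x, y) = Sym2.map (T.smul g) s(a, b) := h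
  exact Sym2.map.injective (T.smul_injective g) hmap

/-- A half-tree missing an endpoint of the edge `(c, d)` lies on one side of that edge. -/
theorem side_subset_or_disjoint (T : GTree G V) {a b c d : V} (hcd : T.graph.Adj c d)
    (hc : c ∉ T.side a b) :
    (∀ x ∈ T.side a b, x ∈ T.side c d) ∨ (∀ x ∈ T.side a b, x ∉ T.side c d) := by
  have key : ∀ {x y}, x ∈ T.side a b → T.graph.Adj x y → s(x, y) ≠ s(a, b) →
      s(x, y) ≠ s(c, d) := by
    intro x y hx hxy hne he
    rcases Sym2.eq_iff.1 he with ⟨rfl, _⟩ | ⟨_, rfl⟩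
    · exact hc hx
    · exact hc (T.mem_side_of_adj hx hxy hne)
  by_cases ha : a ∈ T.side c d
  · exact Or.inl fun x hx => T.side_induction (P := fun x => x ∈ T.side c d) ha
      (fun x y hx hxy hne ih => T.mem_side_of_adj ih hxy (key hx hxy hne)) hx
  · right
    intro x hx
    rw [← T.mem_side_swap hcd] at ha ⊢
    exact T.side_induction (P := fun x => x ∈ T.side d c) ha
      (fun x y hx hxy hne ih => T.mem_side_of_adj ih hxy
        (by rw [Sym2.eq_swap (a := d)]; exact key hx hxy hne)) hx

/-- Any two half-trees are nested: one is contained in the other, or they are disjoint, or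
together they cover the tree. -/
theorem side_nested (T : GTree G V) {a b c d : V} (hab : T.graph.Adj a b)
    (hcd : T.graph.Adj c d) :
    (∀ x ∈ T.side a b, x ∈ T.side c d) ∨ (∀ x ∈ T.side c d, x ∈ T.side a b) ∨
      (∀ x ∈ T.side a b, x ∉ T.side c d) ∨ (∀ x, x ∈ T.side a b ∨ x ∈ T.side c d) := by
  by_cases hc : c ∈ T.side a b
  · have hc' : c ∉ T.side b a := fun h => (T.mem_side_swap hab c).1 h hc
    rcases T.side_subset_or_disjoint hcd hc' with h | h
    · refine Or.inr (Or.inr (Or.inr fun x => ?_))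
      exact (T.mem_side_or a b x).imp_right (h x)
    · refine Or.inr (Or.inl fun x hx => ?_)
      exact (T.mem_side_or a b x).resolve_right fun h' => h x h' hx
  · rcases T.side_subset_or_disjoint hcd hc with h | h
    · exact Or.inl h
    · exact Or.inr (Or.inr (Or.inl h))

/-- A half-tree determines its directed edge. -/
theorem eq_of_side_eq (T : GTree G V) {a b c d : V} (hab : T.graph.Adj a b)
    (hcd : T.graph.Adj c d) (h : T.side a b = T.side c d) : c = a ∧ d = b := by
  have hc : c ∈ T.side a b := h ▸ T.left_mem_side c d
  have hd : d ∉ T.side a b := h ▸ T.right_notMem_side hcd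
  have he : s(c, d) = s(a, b) := by
    by_contra hne
    exact hd (T.mem_side_of_adj hc hcd hne)
  rcases Sym2.eq_iff.1 he with h | ⟨rfl, rfl⟩
  · exact h
  · exact absurd hc (T.right_notMem_side hab)

theorem mem_edges_of_walk (T : GTree G V) {a b x y : V} (p : T.graph.Walk x y)
    (hx : x ∉ T.side a b) (hy : y ∈ T.side a b) : s(a, b) ∈ p.edges := by
  by_contra hp
  have hr : (T.graph.deleteEdges {s(a, b)}).Reachable x y := ⟨p.toDeleteEdge _ hp⟩
  exact hx (SimpleGraph.Reachable.trans hy hr.symm)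

/-- If `g` does not stabilize the edge `(a, b)` and `g` expands its `a`-side `A`, then the
half-trees `g ^ n A` exhaust the tree. -/
theorem exists_mem_side_pow (T : GTree G V) {a b : V} (hab : T.graph.Adj a b) (g : G)
    (hg : ∀ x ∈ T.side a b, x ∈ T.side (T.smul g a) (T.smul g b))
    (hgK : g ∉ T.edgeStab a b) (x : V) :
    ∃ n : ℕ, x ∈ T.side (T.smul (g ^ n) a) (T.smul (g ^ n) b) := by
  have hadj : ∀ n : ℕ, T.graph.Adj (T.smul (g ^ n) a) (T.smul (g ^ n) b) :=
    fun n => T.adj_smul _ _ _ hab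
  let A : ℕ → Set V := fun n => T.side (T.smul (g ^ n) a) (T.smul (g ^ n) b)
  have hA0 : A 0 = T.side a b := by simp [A, T.smul_one]
  have hstep : ∀ n, A n ≤ A (n + 1) := by
    intro n y hy
    have h1 := T.smul_mem_side (g ^ n)⁻¹ hy
    rw [inv_smul_smul, inv_smul_smul] at h1
    have h2 := T.smul_mem_side (g ^ n) (hg _ h1)
    rwa [smul_inv_smul, ← T.smul_mul, ← T.smul_mul, ← pow_succ] at h2
  have hmono : Monotone A := monotone_nat_of_le_succ hstep
  have hlt : ∀ n, A n ≠ A (n + 1) := by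
    intro n h
    obtain ⟨h1, h2⟩ := T.eq_of_side_eq (hadj n) (hadj (n + 1)) h
    rw [pow_succ, T.smul_mul] at h1 h2
    exact hgK ⟨T.smul_injective _ h1, T.smul_injective _ h2⟩
  have hAinj : Function.Injective A :=
    (strictMono_nat_of_lt_succ fun n => lt_of_le_of_ne (hstep n) (hlt n)).injective
  by_contra hx
  push Not at hx
  obtain ⟨p⟩ := T.connected.preconnected x a
  have hmem : ∀ n : ℕ, s(T.smul (g ^ n) a, T.smul (g ^ n) b) ∈ p.edges := fun n =>
    T.mem_edges_of_walk p (hx n) (hmono (Nat.zero_le n) (hA0 ▸ T.left_mem_side a b))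
  have hinj : Function.Injective fun n : ℕ => s(T.smul (g ^ n) a, T.smul (g ^ n) b) := by
    intro m n h
    rcases Sym2.eq_iff.1 h with ⟨h1, h2⟩ | ⟨h1, h2⟩
    · apply hAinj
      simp only [A, h1, h2]
    -- In the swapped case `g ^ n * (g ^ m)⁻¹` would interchange the endpoints of an edge.
    · refine absurd ⟨?_, ?_⟩ (T.no_inversion (g ^ n * (g ^ m)⁻¹) _ _ (hadj m))
      · rw [T.smul_mul, inv_smul_smul, h2]
      · rw [T.smul_mul, inv_smul_smul, h1]
  exact (Set.infinite_of_injective_forall_mem hinj hmem) p.edges.finite_toSet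

/-! ### Corners -/

/-- An `H`-finite corner of a left `H`-invariant set, not itself `H`-finite, with a standard set is
finite over the stabilizer of the edge. -/
theorem hFinite_corner (T : GTree G V) {a b : V} (hab : T.graph.Adj a b) (v : V)
    (H : Subgroup G) {X : Set G} (hX : ∀ h ∈ H, ∀ x ∈ X, h * x ∈ X) (hXH : ¬ HFinite H X)
    (hfin : HFinite H (X ∩ T.standardSet a b v)) :
    HFinite (T.edgeStab a b) (X ∩ T.standardSet a b v) := by
  rw [hFinite_iff] at hXH hfin ⊢
  obtain ⟨F, hF⟩ := hfin
  have htrans : ∀ x ∈ X, ∀ h ∈ H, T.smul x v ∈ T.side (T.smul h a) (T.smul h b) →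
      ∃ f ∈ F, x * f⁻¹ ∈ H := by
    intro x hx h hh hxv
    have h1 := T.smul_mem_side h⁻¹ hxv
    rw [inv_smul_smul, inv_smul_smul, ← T.smul_mul] at h1
    obtain ⟨f, hf, hxf⟩ := hF (h⁻¹ * x) ⟨hX _ (H.inv_mem hh) x hx, h1⟩
    refine ⟨f, hf, ?_⟩
    have := H.mul_mem hh hxf
    rwa [← mul_assoc, mul_inv_cancel_left] at this
  have hexp : ∀ h ∈ H, (∀ x ∈ T.side a b, x ∈ T.side (T.smul h a) (T.smul h b)) →
      h ∈ T.edgeStab a b := by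
    intro h hh hsub
    by_contra hK
    refine hXH ⟨F, fun x hx => ?_⟩
    obtain ⟨n, hn⟩ := T.exists_mem_side_pow hab h hsub hK (T.smul x v)
    exact htrans x hx _ (H.pow_mem hh n) hn
  have hmeet : ∀ h ∈ H, ∀ y ∈ T.side a b, y ∈ T.side (T.smul h a) (T.smul h b) →
      h ∈ T.edgeStab a b := by
    intro h hh y hy hy'
    rcases T.side_nested hab (T.adj_smul h _ _ hab) with h1 | h1 | h1 | h1
    · exact hexp h hh h1
    · rw [← inv_mem_iff]
      refine hexp _ (H.inv_mem hh) fun x hx => ?_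
      have h2 := T.smul_mem_side h⁻¹ (h1 _ (T.smul_mem_side h hx))
      rwa [inv_smul_smul] at h2
    · exact absurd hy' (h1 y hy)
    · refine absurd ⟨F, fun x hx => ?_⟩ hXH
      rcases h1 (T.smul x v) with h2 | h2
      · exact hF x ⟨hx, h2⟩
      · exact htrans x hx h hh h2
  -- `r f` is a point of `X ∩ Y` in the coset `H f`, whenever there is one.
  have hr : ∀ f : G, ∃ y : G, (∃ z ∈ X ∩ T.standardSet a b v, z * f⁻¹ ∈ H) →
      y ∈ X ∩ T.standardSet a b v ∧ y * f⁻¹ ∈ H := by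
    intro f
    by_cases h : ∃ z ∈ X ∩ T.standardSet a b v, z * f⁻¹ ∈ H
    · obtain ⟨z, hz⟩ := h
      exact ⟨z, fun _ => hz⟩
    · exact ⟨1, fun h' => absurd h' h⟩
  choose r hr using hr
  classical
  refine ⟨F.image r, fun x hx => ?_⟩
  obtain ⟨f, hf, hxf⟩ := hF x hx
  obtain ⟨hy, hyf⟩ := hr f ⟨x, hx, hxf⟩
  refine ⟨r f, Finset.mem_image_of_mem r hf, ?_⟩
  have hxy : x * (r f)⁻¹ ∈ H := by
    have := H.mul_mem hxf (H.inv_mem hyf)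
    simpa [mul_assoc] using this
  refine hmeet _ hxy (T.smul x v) hx.2 ?_
  have h1 := T.smul_mem_side (x * (r f)⁻¹) hy.2
  rwa [← T.smul_mul, inv_mul_cancel_right] at h1

theorem compl_standardSet (T : GTree G V) {a b : V} (hab : T.graph.Adj a b) (v : V) :
    (T.standardSet a b v)ᶜ = T.standardSet b a v := by
  ext g
  exact (T.mem_side_swap hab _).symm

theorem edgeStab_swap (T : GTree G V) (a b : V) : T.edgeStab b a = T.edgeStab a b := by
  ext g
  exact and_comm

end GTree

/-- if `X` is a nontrivial `H`-almost invariant subset of `G` and `Y` is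
the almost invariant set arising from a splitting of `G` over `K`, and `X` crosses `Y`
(no corner of `(X,Y)` is `K`-finite), then `Y` crosses `X` (no corner is `H`-finite). -/
theorem statement2 {G : Type u} [Group G] {V : Type v} (H K : Subgroup G) (X : Set G)
    (hXai : IsAlmostInvariant H X) (hXnt : IsNontrivialAI H X)
    (T : GTree G V) (a b : V) (hsplit : T.IsSplitting a b K) (v : V)
    (Y : Set G) (hY : Y = T.standardSet a b v)
    (hcross : CrossesWrt K X Y) :
    CrossesWrt H Y X := by
  obtain ⟨hab, -, -, rfl⟩ := hsplit
  subst hY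
  have hX : ∀ h ∈ H, ∀ x ∈ X, h * x ∈ X := fun h hh x hx => by
    rw [← hXai.1 h hh]
    exact ⟨x, hx, rfl⟩
  have hXc : ∀ h ∈ H, ∀ x ∈ Xᶜ, h * x ∈ Xᶜ := fun h hh x hx hx' => by
    have := hX _ (H.inv_mem hh) _ hx'
    rw [inv_mul_cancel_left] at this
    exact hx this
  obtain ⟨h1, h2, h3, h4⟩ := hcross
  rw [T.compl_standardSet hab, ← T.edgeStab_swap] at h2 h4
  unfold CrossesWrt
  rw [T.compl_standardSet hab, Set.inter_comm _ X, Set.inter_comm _ Xᶜ, Set.inter_comm _ X,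
    Set.inter_comm _ Xᶜ]
  exact ⟨fun h => h1 (T.hFinite_corner hab v H hX hXnt.1 h),
    fun h => h3 (T.hFinite_corner hab v H hXc hXnt.2 h),
    fun h => h2 (T.hFinite_corner hab.symm v H hX hXnt.1 h),
    fun h => h4 (T.hFinite_corner hab.symm v H hXc hXnt.2 h)⟩
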